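/- The map φ : F(X,Ω) → M(X,Ω), defined on trees recursively by φ(leaf x) = x and φ(node ω (T₁,…,T_k)) = ⌊_ω φ(T₁)⋯φ(T_k) ⌋_ω, and on forests by φ(T₁,…,T_b) = φ(T₁)⋯φ(T_b), is injective, has image exactly S(X,Ω), satisfies φ(F · F') = φ(F)φ(F') for concatenation of forests, and satisfies φ(B_ω(F)) = P_ω(φ(F)) for every forest F and ω ∈ Ω. Hence φ is an isomorphism of Ω-operated semigroups from F(X,Ω) onto S(X,Ω). -/

import Mathlib

/-- The left bracket letter `⌊_ω` as a one-letter word. -/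
def lbr {X Ω : Type*} (ω : Ω) : FreeMonoid (X ⊕ (Ω ⊕ Ω)) :=
  FreeMonoid.of (Sum.inr (Sum.inl ω))

/-- The right bracket letter `⌋_ω` as a one-letter word. -/
def rbr {X Ω : Type*} (ω : Ω) : FreeMonoid (X ⊕ (Ω ⊕ Ω)) :=
  FreeMonoid.of (Sum.inr (Sum.inr ω))

/-- The operator `P_ω` on the free monoid: `P_ω w = ⌊_ω w ⌋_ω`. -/
def Pop {X Ω : Type*} (ω : Ω) (w : FreeMonoid (X ⊕ (Ω ⊕ Ω))) : FreeMonoid (X ⊕ (Ω ⊕ Ω)) :=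
  lbr ω * w * rbr ω

/-- `S(X,Ω)`: the smallest subset of the free monoid containing all one-letter words `x`
(`x ∈ X`), closed under concatenation and all operators `P_ω`. -/
inductive IsSW (X Ω : Type*) : FreeMonoid (X ⊕ (Ω ⊕ Ω)) → Prop
  | letter (x : X) : IsSW X Ω (FreeMonoid.of (Sum.inl x))
  | mul {u v : FreeMonoid (X ⊕ (Ω ⊕ Ω))} : IsSW X Ω u → IsSW X Ω v → IsSW X Ω (u * v)
  | op (ω : Ω) {u : FreeMonoid (X ⊕ (Ω ⊕ Ω))} : IsSW X Ω u → IsSW X Ω (Pop ω u)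

mutual
  /-- `(X,Ω)`-decorated planar rooted trees. -/
  inductive PTree (X : Type u) (Ω : Type v) : Type (max u v)
    | leaf : X → PTree X Ω
    | node : Ω → PForest X Ω → PTree X Ω

  /-- `(X,Ω)`-decorated planar rooted forests: nonempty finite ordered lists of trees. -/
  inductive PForest (X : Type u) (Ω : Type v) : Type (max u v)
    | single : PTree X Ω → PForest X Ω
    | cons : PTree X Ω → PForest X Ω → PForest X Ω
end

/-- Concatenation of forests. -/
def PForest.mul {X : Type u} {Ω : Type v} : PForest X Ω → PForest X Ω → PForest X Ω
  | .single t, G => .cons t G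
  | .cons t F, G => .cons t (PForest.mul F G)

instance {X : Type u} {Ω : Type v} : Mul (PForest X Ω) := ⟨PForest.mul⟩

theorem PForest.mul_assoc {X : Type u} {Ω : Type v} :
    ∀ a b c : PForest X Ω, a * b * c = a * (b * c)
  | .single _, _, _ => rfl
  | .cons t F, b, c => congrArg (PForest.cons t) (PForest.mul_assoc F b c)

instance {X : Type u} {Ω : Type v} : Semigroup (PForest X Ω) where
  mul_assoc := PForest.mul_assoc

mutual
  /-- The word associated to a tree: `φ(leaf x) = x`,
  `φ(node ω (T₁,…,T_k)) = ⌊_ω φ(T₁)⋯φ(T_k) ⌋_ω`. -/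
  def PTree.toWord {X : Type u} {Ω : Type v} : PTree X Ω → FreeMonoid (X ⊕ (Ω ⊕ Ω))
    | .leaf x => FreeMonoid.of (Sum.inl x)
    | .node ω F => Pop ω F.toWord

  /-- The word associated to a forest: `φ(T₁,…,T_b) = φ(T₁)⋯φ(T_b)`. -/
  def PForest.toWord {X : Type u} {Ω : Type v} : PForest X Ω → FreeMonoid (X ⊕ (Ω ⊕ Ω))
    | .single t => t.toWord
    | .cons t F => t.toWord * F.toWord
end

/-- A word that is empty or starts with a right bracket. -/
def TermW {X : Type u} {Ω : Type v} (r : List (X ⊕ (Ω ⊕ Ω))) : Prop :=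
  r = [] ∨ ∃ ω s, r = Sum.inr (Sum.inr ω) :: s

theorem leaf_toList {X : Type u} {Ω : Type v} (x : X) :
    (PTree.leaf x : PTree X Ω).toWord.toList = [Sum.inl x] := by
  simp [PTree.toWord]

theorem node_toList {X : Type u} {Ω : Type v} (ω : Ω) (F : PForest X Ω) :
    (PTree.node ω F).toWord.toList =
      Sum.inr (Sum.inl ω) :: (F.toWord.toList ++ [Sum.inr (Sum.inr ω)]) := by
  simp [PTree.toWord, Pop, lbr, rbr, FreeMonoid.toList_mul]

theorem single_toList {X : Type u} {Ω : Type v} (t : PTree X Ω) :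
    (PForest.single t).toWord.toList = t.toWord.toList := by
  simp [PForest.toWord]

theorem cons_toList {X : Type u} {Ω : Type v} (t : PTree X Ω) (F : PForest X Ω) :
    (PForest.cons t F).toWord.toList = t.toWord.toList ++ F.toWord.toList := by
  simp [PForest.toWord, FreeMonoid.toList_mul]

theorem tree_not_term {X : Type u} {Ω : Type v} (t : PTree X Ω) (r : List (X ⊕ (Ω ⊕ Ω))) :
    ¬ TermW (t.toWord.toList ++ r) := by
  cases t <;> simp [TermW, leaf_toList, node_toList]

theorem forest_not_term {X : Type u} {Ω : Type v} (F : PForest X Ω)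
    (r : List (X ⊕ (Ω ⊕ Ω))) : ¬ TermW (F.toWord.toList ++ r) := by
  cases F with
  | single t => rw [single_toList]; exact tree_not_term t r
  | cons t F => rw [cons_toList, List.append_assoc]; exact tree_not_term t _

mutual
  theorem tree_cancel {X : Type u} {Ω : Type v} : ∀ (t t' : PTree X Ω)
      (r r' : List (X ⊕ (Ω ⊕ Ω))),
      t.toWord.toList ++ r = t'.toWord.toList ++ r' → t = t' ∧ r = r'
    | .leaf x, t', r, r', h => by
      cases t' with
      | leaf y => simpa [leaf_toList] using h
      | node ω F => simp [leaf_toList, node_toList] at h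
    | .node ω F, t', r, r', h => by
      cases t' with
      | leaf y => simp [leaf_toList, node_toList] at h
      | node ω' F' =>
        simp only [node_toList, List.cons_append, List.append_assoc, List.nil_append,
          List.cons.injEq, Sum.inr.injEq, Sum.inl.injEq] at h
        obtain ⟨h1, h2⟩ := h
        have h3 := forest_cancel F F' _ _ (Or.inr ⟨_, _, rfl⟩) (Or.inr ⟨_, _, rfl⟩) h2
        obtain ⟨h4, h5⟩ := h3
        simp only [List.cons.injEq] at h5
        exact ⟨by rw [h1, h4], h5.2⟩

  theorem forest_cancel {X : Type u} {Ω : Type v} : ∀ (F F' : PForest X Ω)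
      (r r' : List (X ⊕ (Ω ⊕ Ω))), TermW r → TermW r' →
      F.toWord.toList ++ r = F'.toWord.toList ++ r' → F = F' ∧ r = r'
    | .single t, F', r, r', hr, hr', h => by
      cases F' with
      | single t' =>
        rw [single_toList, single_toList] at h
        obtain ⟨h1, h2⟩ := tree_cancel t t' _ _ h
        exact ⟨by rw [h1], h2⟩
      | cons t' F' =>
        rw [single_toList, cons_toList, List.append_assoc] at h
        obtain ⟨h1, h2⟩ := tree_cancel t t' _ _ h
        exact absurd (h2 ▸ hr) (forest_not_term F' r')
    | .cons t F, F', r, r', hr, hr', h => by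
      cases F' with
      | single t' =>
        rw [single_toList, cons_toList, List.append_assoc] at h
        obtain ⟨h1, h2⟩ := tree_cancel t t' _ _ h
        exact absurd (h2 ▸ hr') (forest_not_term F r)
      | cons t' F' =>
        rw [cons_toList, cons_toList, List.append_assoc, List.append_assoc] at h
        obtain ⟨h1, h2⟩ := tree_cancel t t' _ _ h
        obtain ⟨h3, h4⟩ := forest_cancel F F' _ _ hr hr' h2
        exact ⟨by rw [h1, h3], h4⟩
end

mutual
  theorem tree_isSW {X : Type u} {Ω : Type v} : ∀ t : PTree X Ω, IsSW X Ω t.toWord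
    | .leaf x => by rw [PTree.toWord]; exact .letter x
    | .node ω F => by rw [PTree.toWord]; exact .op ω (forest_isSW F)

  theorem forest_isSW {X : Type u} {Ω : Type v} : ∀ F : PForest X Ω, IsSW X Ω F.toWord
    | .single t => by rw [PForest.toWord]; exact tree_isSW t
    | .cons t F => by rw [PForest.toWord]; exact .mul (tree_isSW t) (forest_isSW F)
end

theorem forest_toWord_mul {X : Type u} {Ω : Type v} :
    ∀ F G : PForest X Ω, (F * G).toWord = F.toWord * G.toWord
  | .single t, G => by
    change (PForest.cons t G).toWord = _
    rw [PForest.toWord, PForest.toWord]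
  | .cons t F, G => by
    change (PForest.cons t (F * G)).toWord = _
    rw [PForest.toWord, PForest.toWord, forest_toWord_mul F G, _root_.mul_assoc]

/-- The map `φ : F(X,Ω) → M(X,Ω)` is injective with image exactly `S(X,Ω)`, sends
concatenation of forests to concatenation of words, and intertwines the grafting
operators `B_ω` with the operators `P_ω`.  Hence it is an isomorphism of `Ω`-operated
semigroups from `F(X,Ω)` onto `S(X,Ω)`. -/
theorem forest_toWord_iso_onto_SW (X : Type u) (Ω : Type v) [Nonempty X] [Nonempty Ω] :
    Function.Injective (PForest.toWord (X := X) (Ω := Ω)) ∧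
    Set.range (PForest.toWord (X := X) (Ω := Ω)) = {w | IsSW X Ω w} ∧
    (∀ F G : PForest X Ω, (F * G).toWord = F.toWord * G.toWord) ∧
    ∀ (ω : Ω) (F : PForest X Ω),
      (PForest.single (PTree.node ω F)).toWord = Pop ω F.toWord := by
  have hB : ∀ (ω : Ω) (F : PForest X Ω),
      (PForest.single (PTree.node ω F)).toWord = Pop ω F.toWord := by
    intro ω F
    rw [PForest.toWord, PTree.toWord]
  refine ⟨?_, ?_, forest_toWord_mul, hB⟩
  · intro F G h
    exact (forest_cancel F G [] [] (Or.inl rfl) (Or.inl rfl) (by rw [h])).1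
  · ext w
    constructor
    · rintro ⟨F, rfl⟩
      exact forest_isSW F
    · intro h
      change IsSW X Ω w at h
      induction h with
      | letter x => exact ⟨.single (.leaf x), by rw [PForest.toWord, PTree.toWord]⟩
      | mul _ _ ih1 ih2 =>
        obtain ⟨F, rfl⟩ := ih1
        obtain ⟨G, rfl⟩ := ih2
        exact ⟨F * G, forest_toWord_mul F G⟩
      | op ω _ ih =>
        obtain ⟨F, rfl⟩ := ih
        exact ⟨_, hB ω F⟩
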